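/- arXiv:0708.1503 — 10 statements merged into one kernel-verified Lean document; each statement's English description precedes it below -/
import Mathlib

section
/- For every κ ∈ [0,2] and all p, g ∈ [0,1], p·exp(κ((p−1)² − (g−1)²)) + (1−p)·exp(κ(p² − g²)) ≤ 1. -/
/- With `x` and `y` the exponents under the outcomes 1 and 0, we have `x - y = 2κ(g - p)` and
`p x + (1 - p) y = -κ(g - p)²`. Hoeffding's lemma for the two-point distribution with weights `p`
and `1 - p` bounds the sum by `exp (p x + (1 - p) y + (x - y)² / 8) = exp (-κ(1 - κ/2)(g - p)²)`.
The two-point bound persists for signed weights, `p ∉ [0, 1]`: there convexity of `exp`, used in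
the direction opposite to Jensen's inequality, gives it even without the quadratic term. -/

open MeasureTheory ProbabilityTheory
open Real (exp exp_add)

theorem integral_exp_le_of_ae_mem_Icc {Ω : Type*} [MeasurableSpace Ω] {μ : Measure Ω}
    [IsProbabilityMeasure μ] {X : Ω → ℝ} {a b : ℝ} (hX : AEMeasurable X μ)
    (hab : ∀ᵐ ω ∂μ, X ω ∈ Set.Icc a b) :
    ∫ ω, exp (X ω) ∂μ ≤ exp (∫ ω, X ω ∂μ + (b - a) ^ 2 / 8) := by
  set m := ∫ ω, X ω ∂μ
  have centred_mgf_le : ∫ ω, exp (X ω - m) ∂μ ≤ exp ((b - a) ^ 2 / 8) := by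
    convert! (hasSubgaussianMGF_of_mem_Icc hX hab).mgf_le 1 using 2
    · simp only [mgf, one_mul, m]
    · push_cast
      rw [Real.norm_eq_abs, div_pow, sq_abs]
      ring
  calc ∫ ω, exp (X ω) ∂μ = exp m * ∫ ω, exp (X ω - m) ∂μ := by
        simp only [← integral_const_mul, ← exp_add, add_sub_cancel]
    _ ≤ exp m * exp ((b - a) ^ 2 / 8) := by gcongr
    _ = exp (m + (b - a) ^ 2 / 8) := (exp_add _ _).symm

theorem ae_bernoulliMeasure_of {α : Type*} [MeasurableSpace α] [MeasurableSingletonClass α]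
    {P : α → Prop} {x y : α} (hx : P x) (hy : P y) (p : unitInterval) :
    ∀ᵐ z ∂bernoulliMeasure x y p, P z := by
  rw [bernoulliMeasure_def, ae_add_measure_iff]
  exact ⟨Measure.ae_smul_measure (by simpa [ae_dirac_eq] using hx) _,
    Measure.ae_smul_measure (by simpa [ae_dirac_eq] using hy) _⟩

theorem mul_exp_add_mul_exp_le_of_mem_Icc {p : ℝ} (hp : p ∈ Set.Icc (0 : ℝ) 1) (x y : ℝ) :
    p * exp x + (1 - p) * exp y ≤ exp (p * x + (1 - p) * y + (x - y) ^ 2 / 8) := by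
  have mem_segment := ae_bernoulliMeasure_of (P := (· ∈ Set.uIcc x y))
    Set.left_mem_uIcc Set.right_mem_uIcc ⟨p, hp⟩
  simpa only [id, integral_bernoulliMeasure, smul_eq_mul, max_sub_min_eq_abs, sq_abs,
    sub_sq_comm y x] using integral_exp_le_of_ae_mem_Icc aemeasurable_id mem_segment

theorem convexOn_mul_add_mul_le_of_nonpos {E : Type*} [AddCommGroup E] [Module ℝ E] {s : Set E}
    {f : E → ℝ} (hf : ConvexOn ℝ s f) {p : ℝ} (hp : p ≤ 0) {x y : E} (hx : x ∈ s)
    (hz : p • x + (1 - p) • y ∈ s) :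
    p * f x + (1 - p) * f y ≤ f (p • x + (1 - p) • y) := by
  set z := p • x + (1 - p) • y with z_def
  have one_sub_pos : 0 < 1 - p := by linarith
  have y_eq : y = (1 - p)⁻¹ • z + (-p / (1 - p)) • x := by
    rw [z_def]
    match_scalars <;> field_simp
    ring
  have f_y_le : f y ≤ (1 - p)⁻¹ * f z + -p / (1 - p) * f x := by
    conv_lhs => rw [y_eq]
    exact hf.2 hz hx (by positivity) (div_nonneg (neg_nonneg.2 hp) one_sub_pos.le)
      (by field_simp; ring)
  calc p * f x + (1 - p) * f y
      ≤ p * f x + (1 - p) * ((1 - p)⁻¹ * f z + -p / (1 - p) * f x) := by gcongr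
    _ = f z := by field_simp; ring

theorem mul_exp_add_mul_exp_le (p x y : ℝ) :
    p * exp x + (1 - p) * exp y ≤ exp (p * x + (1 - p) * y + (x - y) ^ 2 / 8) := by
  have of_nonpos {q : ℝ} (hq : q ≤ 0) (u v : ℝ) :
      q * exp u + (1 - q) * exp v ≤ exp (q * u + (1 - q) * v + (u - v) ^ 2 / 8) :=
    calc q * exp u + (1 - q) * exp v
        ≤ exp (q * u + (1 - q) * v) :=
          convexOn_mul_add_mul_le_of_nonpos convexOn_exp hq (Set.mem_univ u) (Set.mem_univ _)
      _ ≤ exp (q * u + (1 - q) * v + (u - v) ^ 2 / 8) :=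
          Real.exp_le_exp.2 (le_add_of_nonneg_right (by positivity))
  rcases le_total p 0 with hp₀ | hp₀
  · exact of_nonpos hp₀ x y
  rcases le_total p 1 with hp₁ | hp₁
  · exact mul_exp_add_mul_exp_le_of_mem_Icc ⟨hp₀, hp₁⟩ x y
  · have swapped := of_nonpos (sub_nonpos.2 hp₁) y x
    rwa [sub_sub_cancel, add_comm, add_comm (_ * y), sub_sq_comm] at swapped

theorem quadratic_one_step_general (κ p g : ℝ) (hκ : κ ∈ Set.Icc (0 : ℝ) 2) :
    p * exp (κ * ((p - 1) ^ 2 - (g - 1) ^ 2)) + (1 - p) * exp (κ * (p ^ 2 - g ^ 2)) ≤ 1 := by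
  set x := κ * ((p - 1) ^ 2 - (g - 1) ^ 2) with x_def
  set y := κ * (p ^ 2 - g ^ 2) with y_def
  have exponent_eq : p * x + (1 - p) * y + (x - y) ^ 2 / 8 =
      -(κ * (2 - κ) * (g - p) ^ 2 / 2) := by
    rw [x_def, y_def]
    ring
  have gap_nonneg : 0 ≤ κ * (2 - κ) * (g - p) ^ 2 / 2 :=
    div_nonneg (mul_nonneg (mul_nonneg hκ.1 (sub_nonneg.2 hκ.2)) (sq_nonneg _)) zero_le_two
  calc p * exp x + (1 - p) * exp y
      ≤ exp (p * x + (1 - p) * y + (x - y) ^ 2 / 8) := mul_exp_add_mul_exp_le p x y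
    _ = exp (-(κ * (2 - κ) * (g - p) ^ 2 / 2)) := by rw [exponent_eq]
    _ ≤ 1 := Real.exp_le_one_iff.2 (neg_nonpos.2 gap_nonneg)

/-- The one-step quadratic-loss supermartingale inequality: for `κ ∈ [0,2]` and
`p, g ∈ [0,1]`, `p·exp(κ((p−1)² − (g−1)²)) + (1−p)·exp(κ(p² − g²)) ≤ 1`. -/
theorem quadratic_one_step (κ p g : ℝ) (hκ : κ ∈ Set.Icc (0:ℝ) 2)
    (hp : p ∈ Set.Icc (0:ℝ) 1) (hg : g ∈ Set.Icc (0:ℝ) 1) :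
    p * Real.exp (κ * ((p - 1) ^ 2 - (g - 1) ^ 2)) +
      (1 - p) * Real.exp (κ * (p ^ 2 - g ^ 2)) ≤ 1 :=
  quadratic_one_step_general κ p g hκ
end

section
/- Fix κ ∈ [0,2]. For every N ≥ 1, all sequences p₁,…,p_N ∈ [0,1], g₁,…,g_N ∈ [0,1], and ω₁,…,ω_{N−1} ∈ {0,1}, define S_N(ω) = exp(κ·[Σ_{n=1}^{N−1}((pₙ−ωₙ)² − (gₙ−ωₙ)²) + ((p_N−ω)² − (g_N−ω)²)]) for ω ∈ {0,1}, and S_{N−1} = exp(κ·Σ_{n=1}^{N−1}((pₙ−ωₙ)² − (gₙ−ωₙ)²)). Then p_N·S_N(1) + (1−p_N)·S_N(0) ≤ S_{N−1}. -/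
/-!
With `d = g - p`, one has `(p - ω)² - (g - ω)² = 2d(ω - p) - d²`. If `ω` has mean `p` and
`ω - p` is sub-Gaussian with variance proxy `c`, then the expectation of the exponential of `κ`
times this difference is at most `exp (2cκ²d² - κd²)`, which is at most `1` when `0 ≤ κ` and
`2κc ≤ 1`. By Hoeffding's lemma a Bernoulli outcome has `c = 1/4`, whence the range `κ ∈ [0, 2]`.
-/

section

open MeasureTheory ProbabilityTheory
open scoped NNReal unitInterval

theorem integral_exp_mul_sq_sub_sq_le_one {Ω : Type*} [MeasurableSpace Ω] {μ : Measure Ω}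
    {X : Ω → ℝ} {m κ : ℝ} {c : ℝ≥0} (hX : HasSubgaussianMGF (fun ω ↦ X ω - m) c μ)
    (hκ : 0 ≤ κ) (hκc : 2 * κ * c ≤ 1) (g : ℝ) :
    ∫ ω, Real.exp (κ * ((m - X ω) ^ 2 - (g - X ω) ^ 2)) ∂μ ≤ 1 := by
  have loss_diff (x : ℝ) : κ * ((m - x) ^ 2 - (g - x) ^ 2) =
      -(κ * (g - m) ^ 2) + 2 * κ * (g - m) * (x - m) := by ring
  have exponent_nonpos : -(κ * (g - m) ^ 2) + c * (2 * κ * (g - m)) ^ 2 / 2 ≤ 0 := by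
    linarith [mul_nonneg (mul_nonneg hκ (sq_nonneg (g - m))) (sub_nonneg.2 hκc)]
  calc ∫ ω, Real.exp (κ * ((m - X ω) ^ 2 - (g - X ω) ^ 2)) ∂μ
      = Real.exp (-(κ * (g - m) ^ 2)) * mgf (fun ω ↦ X ω - m) μ (2 * κ * (g - m)) := by
        simp only [loss_diff, Real.exp_add, integral_const_mul, mgf]
    _ ≤ Real.exp (-(κ * (g - m) ^ 2)) * Real.exp (c * (2 * κ * (g - m)) ^ 2 / 2) := by
        gcongr
        exact hX.mgf_le _
    _ ≤ 1 := by rwa [← Real.exp_add, Real.exp_le_one_iff]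

theorem ae_mem_bernoulliMeasure {α : Type*} [MeasurableSpace α] {x y : α} {t : Set α}
    (ht : MeasurableSet t) (hx : x ∈ t) (hy : y ∈ t) (p : I) : ∀ᵐ z ∂Ber(x, y, p), z ∈ t :=
  mem_ae_iff.2 <| bernoulliMeasure_apply_of_notMem_of_notMem p ht.compl
    (Set.notMem_compl_iff.2 hx) (Set.notMem_compl_iff.2 hy)

theorem hasSubgaussianMGF_bernoulliMeasure (x y : ℝ) (p : I) :
    HasSubgaussianMGF (fun z ↦ z - (p * x + (1 - p) * y)) ((‖x - y‖₊ / 2) ^ 2) Ber(x, y, p) := by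
  have mean : ∫ z, z ∂Ber(x, y, p) = p * x + (1 - p) * y :=
    integral_bernoulliMeasure x y p id
  have width : ‖x ⊔ y - x ⊓ y‖₊ = ‖x - y‖₊ := by
    rw [max_sub_min_eq_abs', Real.nnnorm_abs]
  have range : ∀ᵐ z ∂Ber(x, y, p), z ∈ Set.uIcc x y :=
    ae_mem_bernoulliMeasure measurableSet_uIcc Set.left_mem_uIcc Set.right_mem_uIcc p
  simpa only [id_eq, mean, width] using hasSubgaussianMGF_of_mem_Icc aemeasurable_id range

theorem quadratic_supermartingale_general {κ : ℝ} (hκ : κ ∈ Set.Icc (0 : ℝ) 2) {p : ℝ}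
    (hp : p ∈ Set.Icc (0 : ℝ) 1) (g s : ℝ) :
    p * Real.exp (κ * (s + ((p - 1) ^ 2 - (g - 1) ^ 2))) +
      (1 - p) * Real.exp (κ * (s + ((p - 0) ^ 2 - (g - 0) ^ 2))) ≤ Real.exp (κ * s) := by
  have subgaussian : HasSubgaussianMGF (fun z : ℝ ↦ z - p) (1 / 4) Ber(1, 0, ⟨p, hp⟩) := by
    convert hasSubgaussianMGF_bernoulliMeasure 1 0 ⟨p, hp⟩ using 1
    · simp
    · norm_num [div_pow]
  have one_round : p * Real.exp (κ * ((p - 1) ^ 2 - (g - 1) ^ 2)) +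
      (1 - p) * Real.exp (κ * ((p - 0) ^ 2 - (g - 0) ^ 2)) ≤ 1 := by
    have hκc : 2 * κ * ((1 / 4 : ℝ≥0) : ℝ) ≤ 1 := by
      push_cast
      linarith [hκ.2]
    simpa only [integral_bernoulliMeasure, smul_eq_mul] using
      integral_exp_mul_sq_sub_sq_le_one subgaussian hκ.1 hκc g
  simp only [mul_add κ s, Real.exp_add]
  linarith [mul_le_mul_of_nonneg_left one_round (Real.exp_pos (κ * s)).le]

end

/-- Lemma 2 of the paper: the exponentiated cumulative quadratic-loss difference
process is a supermartingale, for any `κ ∈ [0,2]`.  Sequences are indexed from `0`,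
so `p 0, …, p (N−1)` are the forecasts, `g 0, …, g (N−1)` the expert's predictions,
and `ω 0, …, ω (N−2)` the past outcomes. -/
theorem quadratic_supermartingale (κ : ℝ) (hκ : κ ∈ Set.Icc (0:ℝ) 2)
    (N : ℕ) (hN : 1 ≤ N) (p g : ℕ → ℝ)
    (hp : ∀ n, p n ∈ Set.Icc (0:ℝ) 1) (hg : ∀ n, g n ∈ Set.Icc (0:ℝ) 1)
    (ω : ℕ → ℝ) (hω : ∀ n, ω n = 0 ∨ ω n = 1) :
    p (N - 1) *
        Real.exp (κ * ((∑ n ∈ Finset.range (N - 1),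
            ((p n - ω n) ^ 2 - (g n - ω n) ^ 2)) +
          ((p (N - 1) - 1) ^ 2 - (g (N - 1) - 1) ^ 2))) +
      (1 - p (N - 1)) *
        Real.exp (κ * ((∑ n ∈ Finset.range (N - 1),
            ((p n - ω n) ^ 2 - (g n - ω n) ^ 2)) +
          ((p (N - 1) - 0) ^ 2 - (g (N - 1) - 0) ^ 2))) ≤
    Real.exp (κ * ∑ n ∈ Finset.range (N - 1),
      ((p n - ω n) ^ 2 - (g n - ω n) ^ 2)) :=
  quadratic_supermartingale_general hκ (hp (N - 1)) (g (N - 1)) _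
end

section
/- Let t₀, t₁ : [0,1] → ℝ be continuous functions such that p·t₁(p) + (1−p)·t₀(p) ≤ 0 for every p ∈ [0,1]. Then there exists p* ∈ [0,1] such that t₁(p*) ≤ 0 and t₀(p*) ≤ 0. -/
/-!
By lower semicontinuity, the forecasts `p` with `t₁ p ≤ 0` and those with `t₀ p ≤ 0` form two
relatively closed subsets of `[0, 1]`. A convex combination of two positive values is positive, so
these sets cover `[0, 1]`; the first contains `1` and the second contains `0`. Since `[0, 1]` is
connected, they intersect.
-/

open Set

theorem exists_le_and_le_of_isPreconnected {X α β : Type*} [TopologicalSpace X] [LinearOrder α]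
    [LinearOrder β] {s : Set X} (hs : IsPreconnected s) {f : X → α} {g : X → β}
    (hf : LowerSemicontinuousOn f s) (hg : LowerSemicontinuousOn g s) {a : α} {b : β}
    (hcover : ∀ x ∈ s, f x ≤ a ∨ g x ≤ b) (hfa : ∃ x ∈ s, f x ≤ a) (hgb : ∃ x ∈ s, g x ≤ b) :
    ∃ x ∈ s, f x ≤ a ∧ g x ≤ b := by
  obtain ⟨u, hu, hfu⟩ := lowerSemicontinuousOn_iff_preimage_Iic.1 hf a
  obtain ⟨v, hv, hgv⟩ := lowerSemicontinuousOn_iff_preimage_Iic.1 hg b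
  have mem_u {x} (hx : x ∈ s) : x ∈ u ↔ f x ≤ a := by
    simpa [hx] using (Set.ext_iff.1 hfu x).symm
  have mem_v {x} (hx : x ∈ s) : x ∈ v ↔ g x ≤ b := by
    simpa [hx] using (Set.ext_iff.1 hgv x).symm
  obtain ⟨x, hx, hxu, hxv⟩ : (s ∩ (u ∩ v)).Nonempty :=
    isPreconnected_closed_iff.1 hs u v hu hv
      (fun x hx ↦ (hcover x hx).imp (mem_u hx).2 (mem_v hx).2)
      (hfa.imp fun _ ⟨hx, hfx⟩ ↦ ⟨hx, (mem_u hx).2 hfx⟩)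
      (hgb.imp fun _ ⟨hx, hgx⟩ ↦ ⟨hx, (mem_v hx).2 hgx⟩)
  exact ⟨x, hx, (mem_u hx).1 hxu, (mem_v hx).1 hxv⟩

theorem defensive_one_step_general {E : Type*} [AddCommGroup E] [LinearOrder E]
    [IsOrderedAddMonoid E] [Module ℝ E] [PosSMulMono ℝ E] {t₀ t₁ : ℝ → E}
    (h₀ : LowerSemicontinuousOn t₀ (Icc 0 1)) (h₁ : LowerSemicontinuousOn t₁ (Icc 0 1))
    (h : ∀ p ∈ Icc (0 : ℝ) 1, p • t₁ p + (1 - p) • t₀ p ≤ 0) :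
    ∃ p ∈ Icc (0 : ℝ) 1, t₁ p ≤ 0 ∧ t₀ p ≤ 0 := by
  have hcover : ∀ p ∈ Icc (0 : ℝ) 1, t₁ p ≤ 0 ∨ t₀ p ≤ 0 := fun p hp ↦
    min_le_iff.1 <| (Convex.min_le_combo (t₁ p) (t₀ p) hp.1 (sub_nonneg.2 hp.2)
      (add_sub_cancel p 1)).trans (h p hp)
  have ht₁ : t₁ 1 ≤ 0 := by simpa using h 1 (right_mem_Icc.2 zero_le_one)
  have ht₀ : t₀ 0 ≤ 0 := by simpa using h 0 (left_mem_Icc.2 zero_le_one)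
  exact exists_le_and_le_of_isPreconnected isPreconnected_Icc h₁ h₀ hcover
    ⟨1, right_mem_Icc.2 zero_le_one, ht₁⟩ ⟨0, left_mem_Icc.2 zero_le_one, ht₀⟩

/-- One-step core of the defensive forecasting lemma (Levin, Takemura): if
`t₀, t₁ : [0,1] → ℝ` are continuous and `p·t₁(p) + (1−p)·t₀(p) ≤ 0` for all
`p ∈ [0,1]`, then some `p* ∈ [0,1]` satisfies `t₁(p*) ≤ 0` and `t₀(p*) ≤ 0`. -/
theorem defensive_one_step (t₀ t₁ : ℝ → ℝ)
    (h₀ : ContinuousOn t₀ (Set.Icc 0 1)) (h₁ : ContinuousOn t₁ (Set.Icc 0 1))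
    (h : ∀ p ∈ Set.Icc (0:ℝ) 1, p * t₁ p + (1 - p) * t₀ p ≤ 0) :
    ∃ p ∈ Set.Icc (0:ℝ) 1, t₁ p ≤ 0 ∧ t₀ p ≤ 0 :=
  defensive_one_step_general h₀.lowerSemicontinuousOn h₁.lowerSemicontinuousOn h
end

section
/- Let t₀, t₁ : [0,1] → ℝ be continuous functions. Then there exists p* ∈ [0,1] such that for every q ∈ [0,1], q·t₁(p*) + (1−q)·t₀(p*) ≤ sup_{p ∈ [0,1]} (p·t₁(p) + (1−p)·t₀(p)). -/
/-!
Write `φ(q, p) = q·t₁(p) + (1 - q)·t₀(p)`. Since `φ(q, p) - φ(p, p) = (q - p)·(t₁(p) - t₀(p))`, the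
diagonal value at `p` is already the worst case over `q` as soon as `p` solves the variational
inequality for `t₁ - t₀` on `[0, 1]`. In dimension one such a `p` is either an endpoint at which
`t₁ - t₀` points out of the interval or, by the intermediate value theorem, a zero of `t₁ - t₀`.
-/

open Set

theorem exists_mem_Icc_lt_imp_le_and_lt_imp_le {α δ : Type*}
    [ConditionallyCompleteLinearOrder α] [TopologicalSpace α] [OrderTopology α] [DenselyOrdered α]
    [LinearOrder δ] [TopologicalSpace δ] [OrderClosedTopology δ]
    {a b : α} (hab : a ≤ b) {f : α → δ} (hf : ContinuousOn f (Icc a b)) (c : δ) :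
    ∃ p ∈ Icc a b, (a < p → c ≤ f p) ∧ (p < b → f p ≤ c) := by
  rcases le_total (f a) c with hac | hca
  · exact ⟨a, left_mem_Icc.2 hab, fun h => (lt_irrefl a h).elim, fun _ => hac⟩
  rcases le_total c (f b) with hcb | hbc
  · exact ⟨b, right_mem_Icc.2 hab, fun _ => hcb, fun h => (lt_irrefl b h).elim⟩
  obtain ⟨p, hp, hpc⟩ := intermediate_value_Icc' hab hf ⟨hbc, hca⟩
  exact ⟨p, hp, fun _ => hpc.ge, fun _ => hpc.le⟩

theorem exists_mem_Icc_forall_sub_mul_nonpos {a b : ℝ} (hab : a ≤ b) {f : ℝ → ℝ}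
    (hf : ContinuousOn f (Icc a b)) :
    ∃ p ∈ Icc a b, ∀ q ∈ Icc a b, (q - p) * f p ≤ 0 := by
  obtain ⟨p, hp, hleft, hright⟩ := exists_mem_Icc_lt_imp_le_and_lt_imp_le hab hf 0
  refine ⟨p, hp, fun q hq => ?_⟩
  rcases lt_trichotomy q p with hqp | rfl | hpq
  · exact mul_nonpos_of_nonpos_of_nonneg (sub_nonpos.2 hqp.le) (hleft (hq.1.trans_lt hqp))
  · simp
  · exact mul_nonpos_of_nonneg_of_nonpos (sub_nonneg.2 hpq.le) (hright (hpq.trans_le hq.2))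

theorem ky_fan_special_general {t₀ t₁ : ℝ → ℝ}
    (hsub : ContinuousOn (fun r => t₁ r - t₀ r) (Icc 0 1))
    (hbdd : BddAbove ((fun r => r * t₁ r + (1 - r) * t₀ r) '' Icc 0 1)) :
    ∃ p ∈ Icc (0 : ℝ) 1, ∀ q ∈ Icc (0 : ℝ) 1,
      q * t₁ p + (1 - q) * t₀ p ≤ sSup ((fun r => r * t₁ r + (1 - r) * t₀ r) '' Icc 0 1) := by
  obtain ⟨p, hp, hvar⟩ := exists_mem_Icc_forall_sub_mul_nonpos zero_le_one hsub
  refine ⟨p, hp, fun q hq => ?_⟩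
  calc q * t₁ p + (1 - q) * t₀ p
      = (p * t₁ p + (1 - p) * t₀ p) + (q - p) * (t₁ p - t₀ p) := by ring
    _ ≤ p * t₁ p + (1 - p) * t₀ p := add_le_of_nonpos_right (hvar q hq)
    _ ≤ sSup ((fun r => r * t₁ r + (1 - r) * t₀ r) '' Icc 0 1) :=
        le_csSup hbdd (mem_image_of_mem _ hp)

/-- Specialization of Ky Fan's minimax theorem used in the defensive forecasting
lemma: for continuous `t₀, t₁ : [0,1] → ℝ` there is `p* ∈ [0,1]` such that for all
`q ∈ [0,1]`, `q·t₁(p*) + (1−q)·t₀(p*) ≤ sup_{p∈[0,1]} (p·t₁(p) + (1−p)·t₀(p))`. -/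
theorem ky_fan_special (t₀ t₁ : ℝ → ℝ)
    (h₀ : ContinuousOn t₀ (Set.Icc 0 1)) (h₁ : ContinuousOn t₁ (Set.Icc 0 1)) :
    ∃ p ∈ Set.Icc (0:ℝ) 1, ∀ q ∈ Set.Icc (0:ℝ) 1,
      q * t₁ p + (1 - q) * t₀ p ≤
        sSup ((fun r => r * t₁ r + (1 - r) * t₀ r) '' Set.Icc 0 1) :=
  ky_fan_special_general (h₁.sub h₀) (isCompact_Icc.bddAbove_image (by fun_prop))
end

section
/- Let E be a topological space and let S be a forecast-continuous supermartingale: S assigns a real number to each finite history (g₁,p₁,ω₁,…,g_N,p_N,ω_N) with gₙ ∈ E, pₙ ∈ [0,1], ωₙ ∈ {0,1}, it satisfies p_N·S(…,g_N,p_N,1) + (1−p_N)·S(…,g_N,p_N,0) ≤ S(g₁,p₁,ω₁,…,g_{N−1},p_{N−1},ω_{N−1}) for all N and all arguments, and S(g₁,p₁,ω₁,…,g_N,p_N,ω_N) is jointly continuous in (g_N, p_N) ∈ E × [0,1]. Then Forecaster has a strategy — a rule choosing pₙ ∈ [0,1] as a function of the past history (γ₁,p₁,ω₁,…,γ_{n−1},p_{n−1},ω_{n−1})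 and the current continuous function γₙ : [0,1] → E — which guarantees S₀ ≥ S₁ ≥ S₂ ≥ ⋯ for all choices of continuous γₙ : [0,1] → E and outcomes ωₙ ∈ {0,1}, where Sₙ = S(γ₁(p₁),p₁,ω₁,…,γₙ(pₙ),pₙ,ωₙ) and S₀ = S() is the value at the empty history. -/
/-!
Fix a history `h` and Expert's function `γ`. By lower semicontinuity, the forecasts `p` after which
the outcome `ω` does not increase `S` form a closed set `F ω ⊆ [0,1]`. Since a weighted mean
dominates the smaller of its two terms, the supermartingale inequality gives `F 0 ∪ F 1 = [0,1]`;
at `p = 0` and `p = 1` it gives `0 ∈ F 0` and `1 ∈ F 1`. By connectedness of `[0,1]` the two sets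
meet, and Forecaster plays a common point.
-/

theorem exists_le_and_le_of_forall_le_or_le {X α β : Type*} [TopologicalSpace X]
    [PreconnectedSpace X] [LinearOrder α] [LinearOrder β] {f : X → α} {g : X → β} {a : α} {b : β}
    (hf : LowerSemicontinuous f) (hg : LowerSemicontinuous g)
    (hfg : ∀ x, f x ≤ a ∨ g x ≤ b) (hfa : ∃ x, f x ≤ a) (hgb : ∃ x, g x ≤ b) :
    ∃ x, f x ≤ a ∧ g x ≤ b := by
  have hmeet := isPreconnected_closed_iff.1 (isPreconnected_univ (α := X))
    {x | f x ≤ a} {x | g x ≤ b} (hf.isClosed_preimage a) (hg.isClosed_preimage b) fun x _ => hfg x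
  simp only [Set.univ_inter] at hmeet
  exact hmeet hfa hgb

theorem exists_forecast_le_and_le {a b : unitInterval → ℝ} {c : ℝ}
    (ha : LowerSemicontinuous a) (hb : LowerSemicontinuous b)
    (hc : ∀ p : unitInterval, (p : ℝ) * a p + (1 - (p : ℝ)) * b p ≤ c) :
    ∃ p, a p ≤ c ∧ b p ≤ c := by
  have hcover (p : unitInterval) : a p ≤ c ∨ b p ≤ c :=
    min_le_iff.1 <| (Convex.min_le_combo (a p) (b p) p.2.1 (sub_nonneg.2 p.2.2)
      (add_sub_cancel _ _)).trans (hc p)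
  have ha_one : a 1 ≤ c := by simpa using hc 1
  have hb_zero : b 0 ≤ c := by simpa using hc 0
  exact exists_le_and_le_of_forall_le_or_le ha hb hcover ⟨1, ha_one⟩ ⟨0, hb_zero⟩

theorem exists_strategy_of_forall_exists_move {Γ X E Ω : Type*} [FunLike Γ X E]
    {R : List (E × X × Ω) → List (E × X × Ω) → Prop}
    (hR : ∀ (h : List (E × X × Ω)) (γ : Γ), ∃ p, ∀ ω, R h (h ++ [(γ p, p, ω)])) :
    ∃ σ : List (Γ × X × Ω) → Γ → X, ∀ (γ : ℕ → Γ) (ω : ℕ → Ω) (p : ℕ → X),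
      (∀ n, p n = σ ((List.range n).map fun i => (γ i, p i, ω i)) (γ n)) →
      ∀ n, R ((List.range n).map fun i => (γ i (p i), p i, ω i))
        ((List.range (n + 1)).map fun i => (γ i (p i), p i, ω i)) := by
  choose τ hτ using hR
  refine ⟨fun h => τ (h.map fun x => (x.1 x.2.1, x.2)), fun γ ω p hp n => ?_⟩
  have hpn : p n = τ ((List.range n).map fun i => (γ i (p i), p i, ω i)) (γ n) := by
    simpa only [List.map_map, Function.comp_def] using hp n
  rw [List.range_succ, List.map_append, List.map_singleton, hpn]
  exact hτ _ _ _

theorem defensive_forecasting_general {E : Type*} [TopologicalSpace E]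
    (S : List (E × unitInterval × Bool) → ℝ)
    (hsuper : ∀ (h : List (E × unitInterval × Bool)) (g : E) (p : unitInterval),
      (p : ℝ) * S (h ++ [(g, p, true)]) + (1 - (p : ℝ)) * S (h ++ [(g, p, false)]) ≤ S h)
    (hlsc : ∀ (h : List (E × unitInterval × Bool)) (ω : Bool),
      LowerSemicontinuous fun gp : E × unitInterval => S (h ++ [(gp.1, gp.2, ω)])) :
    ∃ σ : List (C(unitInterval, E) × unitInterval × Bool) → C(unitInterval, E) → unitInterval,
      ∀ (γ : ℕ → C(unitInterval, E)) (ω : ℕ → Bool) (p : ℕ → unitInterval),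
        (∀ n, p n = σ ((List.range n).map fun i => (γ i, p i, ω i)) (γ n)) →
        ∀ n, S ((List.range (n + 1)).map fun i => (γ i (p i), p i, ω i)) ≤
             S ((List.range n).map fun i => (γ i (p i), p i, ω i)) := by
  refine exists_strategy_of_forall_exists_move (R := fun h h' => S h' ≤ S h) fun h γ => ?_
  have hgraph : Continuous fun p : unitInterval => (γ p, p) := by fun_prop
  obtain ⟨p, htrue, hfalse⟩ := exists_forecast_le_and_le
    ((hlsc h true).comp hgraph) ((hlsc h false).comp hgraph)
    fun p => hsuper h (γ p) p
  exact ⟨p, Bool.forall_bool.2 ⟨hfalse, htrue⟩⟩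

/-- Lemma 1 of the paper (Levin, Takemura): for any forecast-continuous
supermartingale `S` there is a strategy for Forecaster ensuring
`S₀ ≥ S₁ ≥ S₂ ≥ ⋯` whatever continuous second-guessing functions `γₙ : [0,1] → E`
Expert plays and whatever outcomes `ωₙ ∈ {0,1}` Reality plays.

A history is a list of triples `(gₙ, pₙ, ωₙ) ∈ E × [0,1] × {0,1}`; the process `S`
assigns a real number to every history. A strategy is a function of the past
history (with the experts' functions recorded) and the current function `γₙ`;
`p : ℕ → [0,1]` is required to be the play consistent with the strategy. -/
theorem defensive_forecasting {E : Type*} [TopologicalSpace E]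
    (S : List (E × Set.Icc (0:ℝ) 1 × Bool) → ℝ)
    (hsuper : ∀ (h : List (E × Set.Icc (0:ℝ) 1 × Bool)) (g : E) (p : Set.Icc (0:ℝ) 1),
      (p : ℝ) * S (h ++ [(g, p, true)]) + (1 - (p : ℝ)) * S (h ++ [(g, p, false)]) ≤ S h)
    (hcont : ∀ (h : List (E × Set.Icc (0:ℝ) 1 × Bool)) (ω : Bool),
      Continuous fun gp : E × Set.Icc (0:ℝ) 1 => S (h ++ [(gp.1, gp.2, ω)])) :
    ∃ σ : List (C(Set.Icc (0:ℝ) 1, E) × Set.Icc (0:ℝ) 1 × Bool) →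
          C(Set.Icc (0:ℝ) 1, E) → Set.Icc (0:ℝ) 1,
      ∀ (γ : ℕ → C(Set.Icc (0:ℝ) 1, E)) (ω : ℕ → Bool) (p : ℕ → Set.Icc (0:ℝ) 1),
        (∀ n, p n = σ ((List.range n).map fun i => (γ i, p i, ω i)) (γ n)) →
        ∀ n, S ((List.range (n + 1)).map fun i => (γ i (p i), p i, ω i)) ≤
             S ((List.range n).map fun i => (γ i (p i), p i, ω i)) :=
  defensive_forecasting_general S hsuper fun h ω => (hcont h ω).lowerSemicontinuous
end

section
/- In prediction with expert advice under quadratic loss with K experts and second-guessing, there exists a strategy for Learner guaranteeing, for all N ≥ 1 and all k ∈ {1,…,K}, that Σ_{n=1}^N (pₙ − ωₙ)² ≤ Σ_{n=1}^N (γₙᵏ(pₙ) − ωₙ)² + (ln K)/2, for all choices of the experts' continuous functions and of the outcomes. -/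
/-!
Give expert `k`, of prior weight `w k`, the current weight `w k * exp (2 * R k)`, where `R k` is
Learner's cumulative regret against `k`. If the total weight never grows, then
`w k * exp (2 * R k) ≤ ∑ j, w j`, and taking logarithms bounds `R k`.

To keep the total weight from growing, let `f o p` be its next value when Learner predicts `p` and
the outcome is `o`. Hoeffding's lemma for a Bernoulli variable of parameter `p` says that
`p * f 1 p + (1 - p) * f 0 p` is at most the current total, whatever the experts say. So at each
`p` one of `f 1 p`, `f 0 p` is at most the current total; at `p = 0` it is `f 0`, at `p = 1` it is
`f 1`, and connectedness of `[0, 1]` gives a `p` where both are. Outcomes strictly between `0` and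
`1` are covered because `f` is convex in `o`.
-/

section

open scoped unitInterval

open Real

section OneRound

open ProbabilityTheory in
lemma centered_bernoulli_mgf_le (p : I) (s : ℝ) :
    p * exp (s * (1 - p)) + (1 - p) * exp (s * (0 - p)) ≤ exp (s ^ 2 / 8) := by
  have mem_Icc : ∀ᵐ x ∂Ber((1 : ℝ), 0, p), id x ∈ Set.Icc (0 : ℝ) 1 := by
    simp [bernoulliMeasure_def, MeasureTheory.ae_add_measure_iff,
      MeasureTheory.Measure.ae_smul_measure]
  have hoeffding := (hasSubgaussianMGF_of_mem_Icc aemeasurable_id mem_Icc).mgf_le s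
  simp only [mgf, integral_bernoulliMeasure, id_eq, smul_eq_mul, mul_one, mul_zero, add_zero,
    sub_zero, nnnorm_one] at hoeffding
  refine hoeffding.trans_eq (congrArg exp ?_)
  push_cast
  ring

/-- The regret of the prediction `p` against the prediction `g` on the outcome `o`, that is, the
difference of their quadratic losses. -/
def sqRegret (p g o : ℝ) : ℝ := (p - o) ^ 2 - (g - o) ^ 2

lemma bernoulli_mean_exp_sqRegret_le_one (p : I) (g : ℝ) :
    p * exp (2 * sqRegret p g 1) + (1 - p) * exp (2 * sqRegret p g 0) ≤ 1 := by
  set s : ℝ := 4 * (g - p) with hs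
  have exp_sqRegret (o : ℝ) :
      exp (2 * sqRegret p g o) = exp (s * (o - p)) / exp (s ^ 2 / 8) := by
    rw [← exp_sub, sqRegret, hs]
    ring_nf
  rw [exp_sqRegret, exp_sqRegret, mul_div_assoc', mul_div_assoc', ← add_div,
    div_le_one (exp_pos _)]
  exact centered_bernoulli_mgf_le p s

lemma exp_sqRegret_le_convexCombination (p g : ℝ) (o : I) :
    exp (2 * sqRegret p g o) ≤
      o * exp (2 * sqRegret p g 1) + (1 - o) * exp (2 * sqRegret p g 0) := by
  have affine : 2 * sqRegret p g o = o * (2 * sqRegret p g 1) + (1 - o) * (2 * sqRegret p g 0) := by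
    simp only [sqRegret]
    ring
  rw [affine]
  exact convexOn_exp.2 (Set.mem_univ _) (Set.mem_univ _) o.2.1 (sub_nonneg.2 o.2.2)
    (add_sub_cancel _ _)

lemma exists_le_and_le_of_convexCombination_le {f₁ f₀ : I → ℝ} {c : ℝ} (h₁ : Continuous f₁)
    (h₀ : Continuous f₀) (h : ∀ p : I, p * f₁ p + (1 - p) * f₀ p ≤ c) :
    ∃ p, f₁ p ≤ c ∧ f₀ p ≤ c := by
  have cover (p : I) : f₁ p ≤ c ∨ f₀ p ≤ c := by
    by_contra! hlt
    exact (h p).not_gt <| (convex_Ioi c) hlt.1 hlt.2 p.2.1 (sub_nonneg.2 p.2.2)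
      (add_sub_cancel _ _)
  obtain ⟨p, -, hp⟩ := isPreconnected_closed_iff.1 isPreconnected_univ {p | f₁ p ≤ c}
    {p | f₀ p ≤ c} (isClosed_le h₁ continuous_const) (isClosed_le h₀ continuous_const)
    (fun p _ => cover p) ⟨1, trivial, by simpa using h 1⟩ ⟨0, trivial, by simpa using h 0⟩
  exact ⟨p, hp⟩

variable {ι : Type*} [Fintype ι]

lemma exists_sum_mul_exp_sqRegret_le {w : ι → ℝ} (hw : ∀ k, 0 ≤ w k) (g : ι → C(I, ℝ)) :
    ∃ p : I, ∀ o : I, ∑ k, w k * exp (2 * sqRegret p (g k p) o) ≤ ∑ k, w k := by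
  let total (o : ℝ) (p : I) : ℝ := ∑ k, w k * exp (2 * sqRegret p (g k p) o)
  have continuous_total (o : ℝ) : Continuous (total o) := by
    simp only [total, sqRegret]
    fun_prop
  have combination (p : I) (t : ℝ) : t * total 1 p + (1 - t) * total 0 p =
      ∑ k, w k * (t * exp (2 * sqRegret p (g k p) 1) +
        (1 - t) * exp (2 * sqRegret p (g k p) 0)) := by
    simp only [total, Finset.mul_sum, ← Finset.sum_add_distrib]
    exact Finset.sum_congr rfl fun k _ => by ring
  obtain ⟨p, h₁, h₀⟩ := exists_le_and_le_of_convexCombination_le (continuous_total 1)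
    (continuous_total 0) fun p => (combination p p).trans_le <| Finset.sum_le_sum fun k _ =>
      mul_le_of_le_one_right (hw k) (bernoulli_mean_exp_sqRegret_le_one p (g k p))
  refine ⟨p, fun o => ?_⟩
  calc total o p
      ≤ ∑ k, w k * (o * exp (2 * sqRegret p (g k p) 1) +
          (1 - o) * exp (2 * sqRegret p (g k p) 0)) :=
        Finset.sum_le_sum fun k _ =>
          mul_le_mul_of_nonneg_left (exp_sqRegret_le_convexCombination p (g k p) o) (hw k)
    _ = o * total 1 p + (1 - o) * total 0 p := (combination p o).symm
    _ ≤ ∑ k, w k :=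
        (convex_Iic (∑ k, w k)) h₁ h₀ o.2.1 (sub_nonneg.2 o.2.2) (add_sub_cancel _ _)

end OneRound

/-- A completed round of prediction with second-guessing experts indexed by `ι`. What the experts
announce are functions of the prediction, and they may take any real value. -/
structure ForecastRound (ι : Type*) where
  advice : ι → C(I, ℝ)
  prediction : I
  outcome : I

variable {ι : Type*}

/-- Learner's regret against expert `k` in a single round. -/
def ForecastRound.regret (r : ForecastRound ι) (k : ι) : ℝ :=
  sqRegret r.prediction (r.advice k r.prediction) r.outcome

/-- The exponential weight of expert `k` after the history `h`, for prior weights `w`. The learning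
rate `2` is the one for which Hoeffding's lemma makes the quadratic terms cancel. -/
noncomputable def expWeight (w : ι → ℝ) (h : List (ForecastRound ι)) (k : ι) : ℝ :=
  w k * exp (2 * (h.map (·.regret k)).sum)

lemma expWeight_nonneg {w : ι → ℝ} (hw : ∀ k, 0 ≤ w k) (h : List (ForecastRound ι)) (k : ι) :
    0 ≤ expWeight w h k :=
  mul_nonneg (hw k) (exp_pos _).le

lemma expWeight_nil (w : ι → ℝ) (k : ι) : expWeight w [] k = w k := by
  simp [expWeight]

lemma expWeight_concat (w : ι → ℝ) (h : List (ForecastRound ι)) (r : ForecastRound ι) (k : ι) :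
    expWeight w (h ++ [r]) k = expWeight w h k * exp (2 * r.regret k) := by
  simp [expWeight, mul_add, exp_add, mul_assoc]

variable [Fintype ι]

lemma exists_strategy_sum_expWeight_concat_le {w : ι → ℝ} (hw : ∀ k, 0 ≤ w k) :
    ∃ strategy : List (ForecastRound ι) → (ι → C(I, ℝ)) → I, ∀ h g o,
      ∑ k, expWeight w (h ++ [⟨g, strategy h g, o⟩]) k ≤ ∑ k, expWeight w h k := by
  choose strategy hstrategy using fun h g =>
    exists_sum_mul_exp_sqRegret_le (expWeight_nonneg hw h) g
  refine ⟨strategy, fun h g o => ?_⟩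
  simpa only [expWeight_concat, ForecastRound.regret] using hstrategy h g o

lemma sum_regret_le_of_sum_expWeight_le {w : ι → ℝ} (hw : ∀ k, 0 ≤ w k)
    {h : List (ForecastRound ι)} {W : ℝ} (hW : ∑ k, expWeight w h k ≤ W) {k : ι} (hk : 0 < w k) :
    (h.map (·.regret k)).sum ≤ log (W / w k) / 2 := by
  have weight_le : w k * exp (2 * (h.map (·.regret k)).sum) ≤ W :=
    (Finset.single_le_sum (fun j _ => expWeight_nonneg hw h j) (Finset.mem_univ k)).trans hW
  have exp_le : exp (2 * (h.map (·.regret k)).sum) ≤ W / w k := (le_div_iff₀' hk).2 weight_le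
  have le_log := (le_log_iff_exp_le ((exp_pos _).trans_le exp_le)).2 exp_le
  linarith

theorem expert_advice_quadratic_general {w : ι → ℝ} (hw : ∀ k, 0 ≤ w k) :
    ∃ strategy : List (ForecastRound ι) → (ι → C(I, ℝ)) → I,
      ∀ (γ : ℕ → ι → C(I, ℝ)) (ω p : ℕ → I),
        (∀ n, p n = strategy ((List.range n).map fun i => ⟨γ i, p i, ω i⟩) (γ n)) →
        ∀ (N : ℕ) (k : ι), 0 < w k →
          ∑ n ∈ Finset.range N, ((p n : ℝ) - ω n) ^ 2 ≤
            ∑ n ∈ Finset.range N, (γ n k (p n) - ω n) ^ 2 + log ((∑ j, w j) / w k) / 2 := by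
  obtain ⟨strategy, hstrategy⟩ := exists_strategy_sum_expWeight_concat_le hw
  refine ⟨strategy, fun γ ω p hp N k hk => ?_⟩
  let history (n : ℕ) : List (ForecastRound ι) := (List.range n).map fun i => ⟨γ i, p i, ω i⟩
  have history_succ (n : ℕ) :
      history (n + 1) = history n ++ [⟨γ n, strategy (history n) (γ n), ω n⟩] := by
    simp only [history, List.range_succ, List.map_append, List.map_singleton, ← hp n]
  have sum_expWeight_le (n : ℕ) : ∑ j, expWeight w (history n) j ≤ ∑ j, w j := by
    induction n with
    | zero => exact (Finset.sum_congr rfl fun j _ => expWeight_nil w j).le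
    | succ n ih => exact history_succ n ▸ (hstrategy (history n) (γ n) (ω n)).trans ih
  have sum_regret : ((history N).map (·.regret k)).sum =
      ∑ n ∈ Finset.range N, sqRegret (p n) (γ n k (p n)) (ω n) := by
    simp only [history, List.map_map]
    rfl
  have regret_le := sum_regret_le_of_sum_expWeight_le hw (sum_expWeight_le N) hk
  simp only [sum_regret, sqRegret, Finset.sum_sub_distrib] at regret_le
  exact sub_le_iff_le_add'.1 regret_le

end

/-- Theorem 1 of the paper: in prediction with expert advice under quadratic loss
with `K` continuous second-guessing experts, Learner has a strategy guaranteeing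
`L_N ≤ L_N^k + (ln K)/2` for all `N ≥ 1` and all experts `k`.

At round `n` each expert `k` announces a continuous `γₙᵏ : [0,1] → [0,1]`, Learner
announces `pₙ ∈ [0,1]`, Reality announces `ωₙ ∈ {0,1}`. A strategy maps the past
history together with the current tuple of expert functions to a prediction;
`p : ℕ → [0,1]` is required to be the play consistent with the strategy. -/
theorem expert_advice_quadratic (K : ℕ) (hK : 1 ≤ K) :
    ∃ σ : List ((Fin K → C(Set.Icc (0:ℝ) 1, Set.Icc (0:ℝ) 1)) × Set.Icc (0:ℝ) 1 × Bool) →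
          (Fin K → C(Set.Icc (0:ℝ) 1, Set.Icc (0:ℝ) 1)) → Set.Icc (0:ℝ) 1,
      ∀ (γ : ℕ → Fin K → C(Set.Icc (0:ℝ) 1, Set.Icc (0:ℝ) 1)) (ω : ℕ → Bool)
        (p : ℕ → Set.Icc (0:ℝ) 1),
        (∀ n, p n = σ ((List.range n).map fun i => (γ i, p i, ω i)) (γ n)) →
        ∀ N : ℕ, 1 ≤ N → ∀ k : Fin K,
          (∑ n ∈ Finset.range N, ((p n : ℝ) - (if ω n then 1 else 0)) ^ 2) ≤
            (∑ n ∈ Finset.range N, ((γ n k (p n) : ℝ) - (if ω n then 1 else 0)) ^ 2) +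
              Real.log K / 2 := by
  obtain ⟨strategy, hstrategy⟩ :=
    expert_advice_quadratic_general (w := fun _ : Fin K => 1) fun _ => zero_le_one
  let toReal : C(Set.Icc (0 : ℝ) 1, ℝ) := ⟨Subtype.val, continuous_subtype_val⟩
  let toUnit (b : Bool) : Set.Icc (0 : ℝ) 1 := if b then 1 else 0
  refine ⟨fun h g => strategy (h.map fun x => ⟨fun k => toReal.comp (x.1 k), x.2.1, toUnit x.2.2⟩)
    fun k => toReal.comp (g k), fun γ ω p hp N _ k => ?_⟩
  have regret_le := hstrategy (fun n k => toReal.comp (γ n k)) (fun n => toUnit (ω n)) p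
    (fun n => by simpa only [List.map_map, Function.comp_def] using hp n) N k one_pos
  simpa [toReal, toUnit, apply_ite] using regret_le
end

section
/- Fix κ ∈ [0,1] and define the log loss λ(1,p) = −ln p and λ(0,p) = −ln(1−p). For every N ≥ 1, all sequences p₁,…,p_N ∈ (0,1), g₁,…,g_N ∈ (0,1), and ω₁,…,ω_{N−1} ∈ {0,1}, define S_N(ω) = exp(κ·[Σ_{n=1}^{N−1}(λ(ωₙ,pₙ) − λ(ωₙ,gₙ)) + (λ(ω,p_N) − λ(ω,g_N))]) for ω ∈ {0,1}, and S_{N−1} = exp(κ·Σ_{n=1}^{N−1}(λ(ωₙ,pₙ) − λ(ωₙ,gₙ))). Then p_N·S_N(1) + (1−p_N)·S_N(0) ≤ S_{N−1}. -/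
/-- The log loss function: `λ(1,p) = −ln p`, `λ(0,p) = −ln(1−p)`. -/
noncomputable def logLoss (b : Bool) (x : ℝ) : ℝ :=
  if b then -Real.log x else -Real.log (1 - x)

/-!
The expected one-step growth factor of the process is the Chernoff coefficient
`p ^ (1 - κ) * g ^ κ + (1 - p) ^ (1 - κ) * (1 - g) ^ κ`. Weighted AM-GM bounds it by
`(1 - κ) * (p + (1 - p)) + κ * (g + (1 - g)) = 1`.
-/

theorem mul_exp_mul_neg_log_sub_neg_log {a b : ℝ} (ha : 0 < a) (hb : 0 < b) (κ : ℝ) :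
    a * Real.exp (κ * (-Real.log a - -Real.log b)) = a ^ (1 - κ) * b ^ κ :=
  calc a * Real.exp (κ * (-Real.log a - -Real.log b))
      = Real.exp (Real.log a) * Real.exp (κ * (-Real.log a - -Real.log b)) := by
        rw [Real.exp_log ha]
    _ = Real.exp (Real.log a * (1 - κ)) * Real.exp (Real.log b * κ) := by
        rw [← Real.exp_add, ← Real.exp_add]
        congr 1
        ring
    _ = a ^ (1 - κ) * b ^ κ := by
        rw [Real.rpow_def_of_pos ha, Real.rpow_def_of_pos hb]

theorem rpow_mul_rpow_add_one_sub_le_one {p g κ : ℝ} (hp : p ∈ Set.Icc (0 : ℝ) 1)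
    (hg : g ∈ Set.Icc (0 : ℝ) 1) (hκ : κ ∈ Set.Icc (0 : ℝ) 1) :
    p ^ (1 - κ) * g ^ κ + (1 - p) ^ (1 - κ) * (1 - g) ^ κ ≤ 1 := by
  have am_gm {a b : ℝ} (ha : 0 ≤ a) (hb : 0 ≤ b) :
      a ^ (1 - κ) * b ^ κ ≤ (1 - κ) * a + κ * b :=
    Real.geom_mean_le_arith_mean2_weighted (sub_nonneg.2 hκ.2) hκ.1 ha hb (sub_add_cancel 1 κ)
  calc p ^ (1 - κ) * g ^ κ + (1 - p) ^ (1 - κ) * (1 - g) ^ κ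
      ≤ ((1 - κ) * p + κ * g) + ((1 - κ) * (1 - p) + κ * (1 - g)) :=
        add_le_add (am_gm hp.1 hg.1) (am_gm (sub_nonneg.2 hp.2) (sub_nonneg.2 hg.2))
    _ = 1 := by ring

theorem mul_exp_logLoss_sub_add_le_one {p g κ : ℝ} (hp : p ∈ Set.Ioo (0 : ℝ) 1)
    (hg : g ∈ Set.Ioo (0 : ℝ) 1) (hκ : κ ∈ Set.Icc (0 : ℝ) 1) :
    p * Real.exp (κ * (logLoss true p - logLoss true g)) +
      (1 - p) * Real.exp (κ * (logLoss false p - logLoss false g)) ≤ 1 := by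
  simp only [logLoss, if_true, Bool.false_eq_true, if_false]
  rw [mul_exp_mul_neg_log_sub_neg_log hp.1 hg.1,
    mul_exp_mul_neg_log_sub_neg_log (sub_pos.2 hp.2) (sub_pos.2 hg.2)]
  exact rpow_mul_rpow_add_one_sub_le_one (Set.Ioo_subset_Icc_self hp)
    (Set.Ioo_subset_Icc_self hg) hκ

/-- Lemma 3 of the paper: the exponentiated cumulative log-loss difference process
is a supermartingale, for any `κ ∈ [0,1]`.  Sequences are indexed from `0`, so
`p 0, …, p (N−1)` are the forecasts, `g 0, …, g (N−1)` the expert's predictions,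
and `ω 0, …, ω (N−2)` the past outcomes. -/
theorem log_supermartingale (κ : ℝ) (hκ : κ ∈ Set.Icc (0:ℝ) 1)
    (N : ℕ) (hN : 1 ≤ N) (p g : ℕ → ℝ)
    (hp : ∀ n, p n ∈ Set.Ioo (0:ℝ) 1) (hg : ∀ n, g n ∈ Set.Ioo (0:ℝ) 1)
    (ω : ℕ → Bool) :
    p (N - 1) *
        Real.exp (κ * ((∑ n ∈ Finset.range (N - 1),
            (logLoss (ω n) (p n) - logLoss (ω n) (g n))) +
          (logLoss true (p (N - 1)) - logLoss true (g (N - 1))))) +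
      (1 - p (N - 1)) *
        Real.exp (κ * ((∑ n ∈ Finset.range (N - 1),
            (logLoss (ω n) (p n) - logLoss (ω n) (g n))) +
          (logLoss false (p (N - 1)) - logLoss false (g (N - 1))))) ≤
    Real.exp (κ * ∑ n ∈ Finset.range (N - 1),
      (logLoss (ω n) (p n) - logLoss (ω n) (g n))) := by
  set T := ∑ n ∈ Finset.range (N - 1), (logLoss (ω n) (p n) - logLoss (ω n) (g n))
  set q := p (N - 1)
  set r := g (N - 1)
  calc q * Real.exp (κ * (T + (logLoss true q - logLoss true r))) +
        (1 - q) * Real.exp (κ * (T + (logLoss false q - logLoss false r)))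
      = Real.exp (κ * T) * (q * Real.exp (κ * (logLoss true q - logLoss true r)) +
        (1 - q) * Real.exp (κ * (logLoss false q - logLoss false r))) := by
        rw [mul_add κ T, mul_add κ T, Real.exp_add, Real.exp_add]
        ring
    _ ≤ Real.exp (κ * T) :=
        mul_le_of_le_one_right (Real.exp_nonneg _)
          (mul_exp_logLoss_sub_add_le_one (hp (N - 1)) (hg (N - 1)) hκ)
end

section
/- In prediction with expert advice under log loss with K experts and second-guessing, there exists a strategy for Learner guaranteeing, for all N ≥ 1 and all k ∈ {1,…,K}, that Σ_{n=1}^N λ(ωₙ,pₙ) ≤ Σ_{n=1}^N λ(ωₙ,γₙᵏ(pₙ)) + ln K, for all choices of the experts' continuous functions and of the outcomes, where λ(1,p) = −ln p and λ(0,p) = −ln(1−p) (with values in (−∞,∞]). -/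
/-- The log loss function with values in `(−∞,∞]`: `λ(1,p) = −ln p` and
`λ(0,p) = −ln(1−p)`, equal to `⊤` when the argument of `ln` is `0`. -/
noncomputable def eLogLoss (b : Bool) (x : ℝ) : EReal :=
  if b then (if x = 0 then ⊤ else ((-Real.log x : ℝ) : EReal))
  else (if x = 1 then ⊤ else ((-Real.log (1 - x) : ℝ) : EReal))

/-! Run the Bayesian mixture of the experts: the weight of an expert is its prior weight times the
likelihood it has assigned to the outcomes so far. Second-guessing makes the mixture prediction
depend on Learner's own prediction `p`, but this dependence is continuous, so by the intermediate
value theorem Learner can choose `p` equal to the mixture prediction at `p`. The total weight of the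
experts is then exactly the likelihood that Learner has assigned to the outcomes. Hence Learner's
likelihood is at least the prior weight of any one expert times the likelihood of that expert, and
minus the logarithm of this inequality is the regret bound.
-/

open Finset
open scoped ENNReal

variable {ι : Type*}

/-- The probability of the outcome `b` under the prediction `x`, which is the probability of the
outcome `true`. The log loss is its negative logarithm. It is real-valued, rather than
`unitInterval`-valued, so that it is visibly affine in `x`. -/
def likelihood (b : Bool) (x : ℝ) : ℝ := if b then x else 1 - x

lemma likelihood_nonneg (b : Bool) (x : unitInterval) : 0 ≤ likelihood b x := by
  cases b <;> simp [likelihood, x.2.1, x.2.2]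

lemma neg_ennrealLog_ofReal {x : ℝ} (hx : 0 ≤ x) :
    -ENNReal.log (ENNReal.ofReal x) = if x = 0 then ⊤ else ((-Real.log x : ℝ) : EReal) := by
  rw [ENNReal.log_ofReal]
  obtain rfl | hx := hx.eq_or_lt
  · simp
  · simp [hx.ne', hx.not_ge]

lemma eLogLoss_eq_neg_log_likelihood (b : Bool) (x : unitInterval) :
    eLogLoss b x = -ENNReal.log (ENNReal.ofReal (likelihood b x)) := by
  rw [neg_ennrealLog_ofReal (likelihood_nonneg b x)]
  cases b <;> simp [eLogLoss, likelihood, sub_eq_zero, eq_comm (a := (1 : ℝ))]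

lemma neg_ennrealLog_mul {x y : ℝ≥0∞} (h₀ : x ≠ 0 ∨ y ≠ ∞) (h₁ : x ≠ ∞ ∨ y ≠ 0) :
    -ENNReal.log (x * y) = -ENNReal.log x + -ENNReal.log y := by
  rw [ENNReal.log_mul_add, EReal.neg_add (by simpa) (by simpa), sub_eq_add_neg]

lemma sum_neg_ennrealLog {α : Type*} (s : Finset α) {f : α → ℝ≥0∞} (hf : ∀ i ∈ s, f i ≠ ∞) :
    ∑ i ∈ s, -ENNReal.log (f i) = -ENNReal.log (∏ i ∈ s, f i) := by
  classical
  induction s using Finset.induction_on with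
  | empty => simp
  | insert a s ha ih =>
    rw [forall_mem_insert] at hf
    rw [sum_insert ha, prod_insert ha, ih hf.2,
      neg_ennrealLog_mul (.inr (ENNReal.prod_ne_top hf.2)) (.inl hf.1)]

lemma sum_eLogLoss {α : Type*} (s : Finset α) (ω : α → Bool) (x : α → unitInterval) :
    ∑ i ∈ s, eLogLoss (ω i) (x i) =
      -ENNReal.log (ENNReal.ofReal (∏ i ∈ s, likelihood (ω i) (x i))) := by
  simp only [eLogLoss_eq_neg_log_likelihood]
  rw [sum_neg_ennrealLog s fun _ _ => ENNReal.ofReal_ne_top,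
    ENNReal.ofReal_prod_of_nonneg fun i _ => likelihood_nonneg _ _]

lemma sum_eLogLoss_le_add_neg_log {α : Type*} {s : Finset α} {ω : α → Bool}
    {x y : α → unitInterval} {c : ℝ} (hc : 0 < c)
    (h : c * ∏ i ∈ s, likelihood (ω i) (y i) ≤ ∏ i ∈ s, likelihood (ω i) (x i)) :
    ∑ i ∈ s, eLogLoss (ω i) (x i) ≤
      ∑ i ∈ s, eLogLoss (ω i) (y i) + ((-Real.log c : ℝ) : EReal) := by
  have hlog : ((-Real.log c : ℝ) : EReal) = -ENNReal.log (ENNReal.ofReal c) := by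
    rw [neg_ennrealLog_ofReal hc.le, if_neg hc.ne']
  rw [sum_eLogLoss, sum_eLogLoss, hlog, add_comm,
    ← neg_ennrealLog_mul (.inr ENNReal.ofReal_ne_top) (.inl ENNReal.ofReal_ne_top),
    ← ENNReal.ofReal_mul hc.le]
  exact EReal.neg_le_neg_iff.2 (ENNReal.log_monotone (ENNReal.ofReal_le_ofReal h))

/-- The weight of the expert `k` in the Bayesian mixture with prior `q` after the history `h`, a
list of triples (experts' announcements, Learner's prediction, outcome). It is not normalized. -/
def bayesWeight (q : ι → ℝ) (h : List ((ι → C(unitInterval, unitInterval)) × unitInterval × Bool))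
    (k : ι) : ℝ :=
  q k * (h.map fun t => likelihood t.2.2 (t.1 k t.2.1)).prod

lemma bayesWeight_nonneg {q : ι → ℝ} {k : ι} (hq : 0 ≤ q k)
    (h : List ((ι → C(unitInterval, unitInterval)) × unitInterval × Bool)) :
    0 ≤ bayesWeight q h k :=
  mul_nonneg hq <| List.prod_nonneg <| List.forall_mem_map.2 fun _ _ => likelihood_nonneg _ _

lemma bayesWeight_map_range (q : ι → ℝ) (γ : ℕ → ι → C(unitInterval, unitInterval))
    (p : ℕ → unitInterval) (ω : ℕ → Bool) (n : ℕ) (k : ι) :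
    bayesWeight q ((List.range n).map fun i => (γ i, p i, ω i)) k =
      q k * ∏ i ∈ range n, likelihood (ω i) (γ i k (p i)) := by
  rw [bayesWeight, List.map_map]
  -- A product over `Finset.range n` unfolds to a product over `List.range n`.
  rfl

variable [Fintype ι]

lemma exists_sum_mul_apply_eq_sum_mul {w : ι → ℝ} (hw : ∀ k, 0 ≤ w k)
    (g : ι → C(unitInterval, unitInterval)) :
    ∃ p : unitInterval, ∑ k, w k * (g k p : ℝ) = (∑ k, w k) * p := by
  have at_zero : (∑ k, w k) * ((0 : unitInterval) : ℝ) ≤ ∑ k, w k * (g k 0 : ℝ) := by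
    simpa using sum_nonneg fun k _ => mul_nonneg (hw k) (g k 0).2.1
  have at_one : ∑ k, w k * (g k 1 : ℝ) ≤ (∑ k, w k) * ((1 : unitInterval) : ℝ) := by
    simpa using sum_le_sum fun k _ => mul_le_of_le_one_right (hw k) (g k 1).2.2
  exact intermediate_value_univ₂ (by fun_prop) (by fun_prop) at_one at_zero

lemma sum_mul_likelihood {w x : ι → ℝ} {p : ℝ} (h : ∑ k, w k * x k = (∑ k, w k) * p) (b : Bool) :
    ∑ k, w k * likelihood b (x k) = (∑ k, w k) * likelihood b p := by
  cases b <;> simp [likelihood, mul_sub, h]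

lemma sum_mul_prod_likelihood {q : ι → ℝ} {x : ℕ → ι → ℝ} {p : ℕ → ℝ} {ω : ℕ → Bool}
    (h : ∀ n, ∑ k, (q k * ∏ i ∈ range n, likelihood (ω i) (x i k)) * x n k =
      (∑ k, q k * ∏ i ∈ range n, likelihood (ω i) (x i k)) * p n) (N : ℕ) :
    ∑ k, q k * ∏ n ∈ range N, likelihood (ω n) (x n k) =
      (∑ k, q k) * ∏ n ∈ range N, likelihood (ω n) (p n) := by
  induction N with
  | zero => simp
  | succ n ih =>
    simp only [prod_range_succ, ← mul_assoc]
    rw [sum_mul_likelihood (h n), ih]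

theorem expert_advice_log_general {q : ι → ℝ} (hq : q ∈ stdSimplex ℝ ι) :
    ∃ σ : List ((ι → C(unitInterval, unitInterval)) × unitInterval × Bool) →
        (ι → C(unitInterval, unitInterval)) → unitInterval,
      ∀ (γ : ℕ → ι → C(unitInterval, unitInterval)) (ω : ℕ → Bool) (p : ℕ → unitInterval),
        (∀ n, p n = σ ((List.range n).map fun i => (γ i, p i, ω i)) (γ n)) →
        ∀ (N : ℕ) (k : ι), 0 < q k →
          ∑ n ∈ range N, eLogLoss (ω n) (p n) ≤
            ∑ n ∈ range N, eLogLoss (ω n) (γ n k (p n)) + ((-Real.log (q k) : ℝ) : EReal) := by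
  choose σ hσ using fun h =>
    exists_sum_mul_apply_eq_sum_mul fun k => bayesWeight_nonneg (hq.1 k) h
  refine ⟨σ, fun γ ω p hp N k hk => sum_eLogLoss_le_add_neg_log hk ?_⟩
  have balanced (n : ℕ) := hσ ((List.range n).map fun i => (γ i, p i, ω i)) (γ n)
  simp only [← hp, bayesWeight_map_range] at balanced
  calc q k * ∏ n ∈ range N, likelihood (ω n) (γ n k (p n))
      ≤ ∑ j, q j * ∏ n ∈ range N, likelihood (ω n) (γ n j (p n)) :=
        single_le_sum (f := fun j => q j * ∏ n ∈ range N, likelihood (ω n) (γ n j (p n)))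
          (fun j _ => mul_nonneg (hq.1 j) (prod_nonneg fun _ _ => likelihood_nonneg _ _))
          (mem_univ k)
    _ = ∏ n ∈ range N, likelihood (ω n) (p n) := by
        rw [sum_mul_prod_likelihood balanced, hq.2, one_mul]

/-- Theorem 2 of the paper: in prediction with expert advice under log loss with
`K` continuous second-guessing experts, Learner has a strategy guaranteeing
`L_N ≤ L_N^k + ln K` for all `N ≥ 1` and all experts `k`.

At round `n` each expert `k` announces a continuous `γₙᵏ : [0,1] → [0,1]`, Learner
announces `pₙ ∈ [0,1]`, Reality announces `ωₙ ∈ {0,1}`. A strategy maps the past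
history together with the current tuple of expert functions to a prediction;
`p : ℕ → [0,1]` is required to be the play consistent with the strategy. -/
theorem expert_advice_log (K : ℕ) (hK : 1 ≤ K) :
    ∃ σ : List ((Fin K → C(Set.Icc (0:ℝ) 1, Set.Icc (0:ℝ) 1)) × Set.Icc (0:ℝ) 1 × Bool) →
          (Fin K → C(Set.Icc (0:ℝ) 1, Set.Icc (0:ℝ) 1)) → Set.Icc (0:ℝ) 1,
      ∀ (γ : ℕ → Fin K → C(Set.Icc (0:ℝ) 1, Set.Icc (0:ℝ) 1)) (ω : ℕ → Bool)
        (p : ℕ → Set.Icc (0:ℝ) 1),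
        (∀ n, p n = σ ((List.range n).map fun i => (γ i, p i, ω i)) (γ n)) →
        ∀ N : ℕ, 1 ≤ N → ∀ k : Fin K,
          (∑ n ∈ Finset.range N, eLogLoss (ω n) (p n : ℝ)) ≤
            (∑ n ∈ Finset.range N, eLogLoss (ω n) ((γ n k (p n) : ℝ))) +
              ((Real.log K : ℝ) : EReal) := by
  have : NeZero K := ⟨Nat.one_le_iff_ne_zero.1 hK⟩
  obtain ⟨σ, hσ⟩ := expert_advice_log_general (stdSimplex.barycenter (𝕜 := ℝ) (X := Fin K)).2
  refine ⟨σ, fun γ ω p hp N _ k => ?_⟩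
  simpa [stdSimplex.barycenter_apply, NeZero.pos K] using hσ γ ω p hp N k
end

section
/- Let Ω be a set, Γ a compact topological space, and λ : Ω × Γ → ℝ a loss function bounded below such that γ ↦ λ(ω,γ) is continuous for each ω ∈ Ω. Let η* > 0 be a real number such that the game (Ω,Γ,λ) is η-mixable for every η with 0 < η < η*. Then the game is η*-mixable, where η-mixability means: for all γ₁, γ₂ ∈ Γ and α ∈ [0,1] there exists δ ∈ Γ such that exp(−η·λ(ω,δ)) ≥ α·exp(−η·λ(ω,γ₁)) + (1−α)·exp(−η·λ(ω,γ₂)) for all ω ∈ Ω. -/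
/-!
For `0 < η`, a decision `δ` dominates a mixture of exponentiated losses at rate `η` exactly when its
loss is at most the mix loss of the mixture, in every outcome. So `η`-mixability says that mix
losses are superpredictions. The mix loss is continuous in the learning rate, and since the decision
space is compact, the set of superpredictions is closed for pointwise convergence.
-/

open Real Set

/-- The superpredictions of a game with loss `lam`: the functions of the outcome that are bounded
below by the loss of a single decision. -/
def superpredictions {Ω Γ β : Type*} [LE β] (lam : Ω → Γ → β) : Set (Ω → β) :=
  {m | ∃ δ, ∀ ω, lam ω δ ≤ m ω}

/-- The mix loss at learning rate `η` of the losses `x` and `y` with weights `α` and `1 - α`. It is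
meant for `0 < η` and `α ∈ [0, 1]`; at `η = 0` the division makes it `0`. -/
noncomputable def mixLoss (η α x y : ℝ) : ℝ :=
  -log (α * exp (-η * x) + (1 - α) * exp (-η * y)) / η

/-- `η`-mixability of a game with loss `lam`: every binary convex mixture of exponentiated losses is
dominated by the exponentiated loss of a single decision, uniformly in the outcome. -/
def IsMixable {Ω Γ : Type*} (lam : Ω → Γ → ℝ) (η : ℝ) : Prop :=
  ∀ γ₁ γ₂ : Γ, ∀ α ∈ Icc (0 : ℝ) 1, ∃ δ : Γ, ∀ ω : Ω,
    α * exp (-η * lam ω γ₁) + (1 - α) * exp (-η * lam ω γ₂) ≤ exp (-η * lam ω δ)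

theorem isClosed_superpredictions {Ω Γ β : Type*} [TopologicalSpace Γ] [CompactSpace Γ]
    [LinearOrder β] [TopologicalSpace β] [ClosedIciTopology β] {lam : Ω → Γ → β}
    (hlam : ∀ ω, LowerSemicontinuous (lam ω)) :
    IsClosed (superpredictions lam) := by
  have hclosed : IsClosed {p : Γ × (Ω → β) | ∀ ω, lam ω p.1 ≤ p.2 ω} := by
    simp only [ofPred_forall]
    refine isClosed_iInter fun ω => ?_
    have heval : Continuous fun p : Γ × (Ω → β) => (p.1, p.2 ω) := by fun_prop
    exact (hlam ω).isClosed_epigraph.preimage heval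
  have hproj : superpredictions lam = Prod.snd '' {p : Γ × (Ω → β) | ∀ ω, lam ω p.1 ≤ p.2 ω} := by
    ext m
    simp [superpredictions]
  exact hproj ▸ isClosedMap_snd_of_compactSpace _ hclosed

section MixLoss

variable {η α : ℝ}

theorem exp_mixture_pos (hα : α ∈ Icc (0 : ℝ) 1) (x y : ℝ) :
    0 < α * exp (-η * x) + (1 - α) * exp (-η * y) :=
  convex_Ioi (0 : ℝ) (exp_pos _) (exp_pos _) hα.1 (sub_nonneg.2 hα.2) (add_sub_cancel α 1)

theorem exp_mixture_le_exp_iff_le_mixLoss (hη : 0 < η) (hα : α ∈ Icc (0 : ℝ) 1) (x y z : ℝ) :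
    α * exp (-η * x) + (1 - α) * exp (-η * y) ≤ exp (-η * z) ↔ z ≤ mixLoss η α x y := by
  rw [← log_le_iff_le_exp (exp_mixture_pos hα x y), mixLoss, le_div_iff₀ hη, neg_mul η z,
    le_neg, mul_comm]

theorem continuousAt_mixLoss (hη : η ≠ 0) (hα : α ∈ Icc (0 : ℝ) 1) (x y : ℝ) :
    ContinuousAt (fun θ => mixLoss θ α x y) η := by
  unfold mixLoss
  fun_prop (disch := first | exact hη | exact (exp_mixture_pos hα x y).ne')

end MixLoss

section Mixability

variable {Ω Γ : Type*} {lam : Ω → Γ → ℝ} {η : ℝ}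

theorem isMixable_iff_mixLoss_mem_superpredictions (hη : 0 < η) :
    IsMixable lam η ↔ ∀ γ₁ γ₂ : Γ, ∀ α ∈ Icc (0 : ℝ) 1,
      (fun ω => mixLoss η α (lam ω γ₁) (lam ω γ₂)) ∈ superpredictions lam :=
  forall₄_congr fun _ _ _ hα => exists_congr fun _ => forall_congr' fun _ =>
    exp_mixture_le_exp_iff_le_mixLoss hη hα _ _ _

theorem mixable_at_sup_general [TopologicalSpace Γ] [CompactSpace Γ]
    (hlam : ∀ ω, LowerSemicontinuous (lam ω)) (hη : 0 < η)
    (hmix : η ∈ closure {θ | IsMixable lam θ}) : IsMixable lam η := by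
  rw [isMixable_iff_mixLoss_mem_superpredictions hη]
  intro γ₁ γ₂ α hα
  have hcont : ContinuousAt (fun θ ω => mixLoss θ α (lam ω γ₁) (lam ω γ₂)) η :=
    continuousAt_pi.2 fun ω => continuousAt_mixLoss hη.ne' hα _ _
  have hfreq : ∃ᶠ θ in nhds η,
      (fun ω => mixLoss θ α (lam ω γ₁) (lam ω γ₂)) ∈ superpredictions lam :=
    ((mem_closure_iff_frequently.1 hmix).and_eventually (lt_mem_nhds hη)).mono
      fun θ ⟨hθmix, hθ⟩ => (isMixable_iff_mixLoss_mem_superpredictions hθ).1 hθmix γ₁ γ₂ α hα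
  exact (isClosed_superpredictions hlam).mem_of_frequently_of_tendsto hfreq hcont

end Mixability

/-- By compactness of the decision space, mixability is attained at the supremum
of the learning rates: if the game is `η`-mixable for every `0 < η < η*`, then it
is `η*`-mixable. -/
theorem mixable_at_sup {Ω Γ : Type*} [TopologicalSpace Γ] [CompactSpace Γ]
    (lam : Ω → Γ → ℝ) (hcont : ∀ ω : Ω, Continuous fun γ => lam ω γ)
    (hbdd : ∃ c : ℝ, ∀ (ω : Ω) (γ : Γ), c ≤ lam ω γ)
    (ηstar : ℝ) (hηstar : 0 < ηstar)
    (hmix : ∀ η : ℝ, 0 < η → η < ηstar →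
      ∀ γ₁ γ₂ : Γ, ∀ α ∈ Set.Icc (0:ℝ) 1, ∃ δ : Γ, ∀ ω : Ω,
        α * Real.exp (-η * lam ω γ₁) + (1 - α) * Real.exp (-η * lam ω γ₂) ≤
          Real.exp (-η * lam ω δ)) :
    ∀ γ₁ γ₂ : Γ, ∀ α ∈ Set.Icc (0:ℝ) 1, ∃ δ : Γ, ∀ ω : Ω,
      α * Real.exp (-ηstar * lam ω γ₁) + (1 - α) * Real.exp (-ηstar * lam ω γ₂) ≤
        Real.exp (-ηstar * lam ω δ) :=
  mixable_at_sup_general (fun ω => (hcont ω).lowerSemicontinuous) hηstar <|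
    closure_mono (fun η hη => hmix η hη.1 hη.2) <|
      closure_Ioo hηstar.ne ▸ right_mem_Icc.2 hηstar.le
end

section
/- Let Ω be a set, Γ a set, λ : Ω × Γ → (−∞,∞] a loss function, K ≥ 1, and a, a′ > 0. If Learner has a winning strategy in the global game G_K(a), then for every m ≥ 1 Learner has a winning strategy in the global game G_{K^m}(m·a). In particular, Learner has a winning strategy in G_{K²}(2a). -/
/-- Learner has a winning strategy in the global game `G_K(a)`: there is a rule
choosing Learner's decision from the history so far and the current expert
decisions such that, for every play `γ` of the `K` experts, every play `ω` of
Reality, and the consistent play `g` of Learner, the cumulative losses satisfy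
`L_N ≤ L_N^k + a` for all `N ≥ 1` and all experts `k`. -/
def LearnerWins {Ω Γ : Type*} (lam : Ω → Γ → EReal) (K : ℕ) (a : ℝ) : Prop :=
  ∃ σ : List ((Fin K → Γ) × Γ × Ω) → (Fin K → Γ) → Γ,
    ∀ (γ : ℕ → Fin K → Γ) (ω : ℕ → Ω) (g : ℕ → Γ),
      (∀ n, g n = σ ((List.range n).map fun i => (γ i, g i, ω i)) (γ n)) →
      ∀ N : ℕ, 1 ≤ N → ∀ k : Fin K,
        (∑ n ∈ Finset.range N, lam (ω n) (g n)) ≤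
          (∑ n ∈ Finset.range N, lam (ω n) (γ n k)) + (a : EReal)

/-!
Divide `A * B` experts into `B` pools of `A`. In each pool follow the strategy for `A` experts; its
decisions make the pool a single expert, which loses at most `a` more than any member of the pool.
Playing the strategy for `B` experts against the pools loses at most `b` more than any of them, so
the two regrets add up; iterating gives `K ^ m` experts with regret `m * a`.

The decisions that a strategy recommends to a pool are not the ones Learner plays. Since they are
determined by the experts' decisions and the outcomes, strategies are first rewritten so as not to
consult Learner's own past decisions, after which they can be composed freely.
-/

/-- A strategy in the game with experts `ι` that sees only the experts' past decisions, the past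
outcomes and the current experts' decisions. Learner's own past decisions are left out so that a
rule can be run on a play in which Learner does not follow it. -/
abbrev DecisionRule (ι Γ Ω : Type*) : Type _ :=
  List ((ι → Γ) × Ω) → (ι → Γ) → Γ

namespace DecisionRule

variable {ι κ Γ Ω : Type*}

/-- The decision that the rule makes at round `n`, when the experts play `γ` and the outcomes
are `ω`. -/
def play (S : DecisionRule ι Γ Ω) (γ : ℕ → ι → Γ) (ω : ℕ → Ω) (n : ℕ) : Γ :=
  S ((List.range n).map fun t => (γ t, ω t)) (γ n)

/-- The regret of the rule with respect to expert `k` never exceeds `a`. The condition starts at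
`N = 1`, as in the global game, so that `a` may be negative. -/
def RegretLE (S : DecisionRule ι Γ Ω) (lam : Ω → Γ → EReal) (k : ι) (a : ℝ) : Prop :=
  ∀ (γ : ℕ → ι → Γ) (ω : ℕ → Ω) (N : ℕ), 1 ≤ N →
    ∑ n ∈ Finset.range N, lam (ω n) (S.play γ ω n) ≤
      ∑ n ∈ Finset.range N, lam (ω n) (γ n k) + (a : EReal)

/-- The rule that always repeats the decision of expert `k`. -/
def follow (k : ι) : DecisionRule ι Γ Ω :=
  fun _ e => e k

/-- The rule for experts `κ` that runs a rule for experts `ι`, with expert `f i` in the role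
of `i`; it restricts attention to a pool when `f` is the inclusion of that pool. -/
def comap (S : DecisionRule ι Γ Ω) (f : ι → κ) : DecisionRule κ Γ Ω :=
  fun H e => S (H.map fun r => (r.1 ∘ f, r.2)) (e ∘ f)

/-- The rule that runs `S` with the rules `T j` as its experts. -/
def comp (S : DecisionRule κ Γ Ω) (T : κ → DecisionRule ι Γ Ω) : DecisionRule ι Γ Ω :=
  fun H e => S (H.mapIdx fun n r => (fun j => T j (H.take n) r.1, r.2)) (fun j => T j H e)

theorem play_comap (S : DecisionRule ι Γ Ω) (f : ι → κ) (γ : ℕ → κ → Γ) (ω : ℕ → Ω) :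
    (S.comap f).play γ ω = S.play (fun n => γ n ∘ f) ω := by
  funext n
  simp only [play, comap, List.map_map, Function.comp_def]

theorem play_comp (S : DecisionRule κ Γ Ω) (T : κ → DecisionRule ι Γ Ω) (γ : ℕ → ι → Γ)
    (ω : ℕ → Ω) : (S.comp T).play γ ω = S.play (fun n j => (T j).play γ ω n) ω := by
  funext n
  refine congrArg (S · _) (List.ext_getElem (by simp) fun t ht _ => ?_)
  have ht' : t ≤ n := by simpa using ht.le
  simp [play, ← List.map_take, List.take_range, ht']

theorem regretLE_follow {lam : Ω → Γ → EReal} (k : ι) :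
    (follow k : DecisionRule ι Γ Ω).RegretLE lam k 0 :=
  fun _ _ _ _ => by simp [play, follow]

theorem RegretLE.comap {S : DecisionRule ι Γ Ω} {lam : Ω → Γ → EReal} {i : ι} {a : ℝ}
    (h : S.RegretLE lam i a) (f : ι → κ) : (S.comap f).RegretLE lam (f i) a := by
  intro γ ω N hN
  rw [play_comap]
  exact h _ ω N hN

theorem RegretLE.comp {S : DecisionRule κ Γ Ω} {T : κ → DecisionRule ι Γ Ω}
    {lam : Ω → Γ → EReal} {j : κ} {k : ι} {a b : ℝ}
    (hS : S.RegretLE lam j b) (hT : (T j).RegretLE lam k a) :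
    (S.comp T).RegretLE lam k (a + b) := by
  intro γ ω N hN
  rw [play_comp]
  calc ∑ n ∈ Finset.range N, lam (ω n) (S.play (fun n j => (T j).play γ ω n) ω n)
      ≤ ∑ n ∈ Finset.range N, lam (ω n) ((T j).play γ ω n) + (b : EReal) := hS _ ω N hN
    _ ≤ ∑ n ∈ Finset.range N, lam (ω n) (γ n k) + (a : EReal) + (b : EReal) := by
        gcongr
        exact hT γ ω N hN
    _ = ∑ n ∈ Finset.range N, lam (ω n) (γ n k) + ((a + b : ℝ) : EReal) := by
        rw [EReal.coe_add, add_assoc]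

/-- The history that arises when Learner follows the strategy `σ` while the experts' decisions
and the outcomes are the given ones. -/
def replay (σ : List ((ι → Γ) × Γ × Ω) → (ι → Γ) → Γ) (H : List ((ι → Γ) × Ω)) :
    List ((ι → Γ) × Γ × Ω) :=
  H.foldl (fun P r => P ++ [(r.1, σ P r.1, r.2)]) []

/-- The rule that makes the decisions of the strategy `σ`, reconstructing Learner's own past
decisions. -/
def ofStrategy (σ : List ((ι → Γ) × Γ × Ω) → (ι → Γ) → Γ) : DecisionRule ι Γ Ω :=
  fun H e => σ (replay σ H) e

theorem replay_map_range (σ : List ((ι → Γ) × Γ × Ω) → (ι → Γ) → Γ) (γ : ℕ → ι → Γ)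
    (ω : ℕ → Ω) (n : ℕ) :
    replay σ ((List.range n).map fun t => (γ t, ω t)) =
      (List.range n).map fun t => (γ t, (ofStrategy σ).play γ ω t, ω t) := by
  induction n with
  | zero => rfl
  | succ n ih =>
    rw [List.range_succ, List.map_append, List.map_append, ← ih]
    simp only [replay, List.foldl_append]
    rfl

theorem play_ofStrategy (σ : List ((ι → Γ) × Γ × Ω) → (ι → Γ) → Γ) (γ : ℕ → ι → Γ)
    (ω : ℕ → Ω) (n : ℕ) :
    (ofStrategy σ).play γ ω n =
      σ ((List.range n).map fun t => (γ t, (ofStrategy σ).play γ ω t, ω t)) (γ n) :=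
  congrArg (σ · (γ n)) (replay_map_range σ γ ω n)

end DecisionRule

section

open DecisionRule

variable {Ω Γ : Type*} {lam : Ω → Γ → EReal}

theorem learnerWins_iff_exists_decisionRule {K : ℕ} {a : ℝ} :
    LearnerWins lam K a ↔
      ∃ S : DecisionRule (Fin K) Γ Ω, ∀ k, S.RegretLE lam k a := by
  constructor
  · rintro ⟨σ, hσ⟩
    exact ⟨ofStrategy σ, fun k γ ω N hN => hσ γ ω _ (play_ofStrategy σ γ ω) N hN k⟩
  · rintro ⟨S, hS⟩
    refine ⟨fun H e => S (H.map fun r => (r.1, r.2.2)) e, fun γ ω g hg N hN k => ?_⟩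
    have hg_play : g = S.play γ ω := by
      funext n
      simpa only [play, List.map_map, Function.comp_def] using hg n
    rw [hg_play]
    exact hS k γ ω N hN

theorem learnerWins_one_zero : LearnerWins lam 1 0 :=
  learnerWins_iff_exists_decisionRule.2
    ⟨follow 0, fun k => Subsingleton.elim 0 k ▸ regretLE_follow 0⟩

theorem LearnerWins.mul {A B : ℕ} {a b : ℝ} (hA : LearnerWins lam A a)
    (hB : LearnerWins lam B b) : LearnerWins lam (A * B) (a + b) := by
  obtain ⟨S, hS⟩ := learnerWins_iff_exists_decisionRule.1 hA
  obtain ⟨T, hT⟩ := learnerWins_iff_exists_decisionRule.1 hB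
  let pool (j : Fin B) (i : Fin A) : Fin (A * B) := finProdFinEquiv (i, j)
  refine learnerWins_iff_exists_decisionRule.2 ⟨T.comp fun j => S.comap (pool j), fun k => ?_⟩
  obtain ⟨⟨i, j⟩, rfl⟩ := finProdFinEquiv.surjective k
  exact (hT j).comp ((hS i).comap (pool j))

theorem LearnerWins.pow {K : ℕ} {a : ℝ} (h : LearnerWins lam K a) (m : ℕ) :
    LearnerWins lam (K ^ m) (m * a) := by
  induction m with
  | zero => simpa using learnerWins_one_zero
  | succ m ih =>
    rw [pow_succ, Nat.cast_succ, add_one_mul]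
    exact ih.mul h

end

/-- The expert-pool composition step in the proof of Watkins's theorem: if Learner
has a winning strategy in the global game `G_K(a)`, then for every `m ≥ 1` Learner
has a winning strategy in `G_{K^m}(m·a)`; in particular in `G_{K²}(2a)`.  The loss
function takes values in `(−∞,∞]`. -/
theorem global_game_composition {Ω Γ : Type*} (lam : Ω → Γ → EReal)
    (hbot : ∀ (ω : Ω) (γ : Γ), ⊥ < lam ω γ)
    (K : ℕ) (hK : 1 ≤ K) (a : ℝ) (ha : 0 < a)
    (h : LearnerWins lam K a) :
    (∀ m : ℕ, 1 ≤ m → LearnerWins lam (K ^ m) ((m : ℝ) * a)) ∧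
      LearnerWins lam (K ^ 2) (2 * a) :=
  ⟨fun m _ => h.pow m, h.pow 2⟩
end
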